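/- arXiv:1709.08894 — 4 statements merged into one kernel-verified Lean document; each statement's English description precedes it below -/
import Mathlib

section
/- Let μ and ν be two probability measures on ℝⁿ (with the Euclidean norm) such that ∫‖x‖ dμ(x) < ∞ and ∫‖x‖ dν(x) < ∞. Then the infimum over all couplings π of μ and ν of ∫ ‖x−y‖ dπ(x,y) is attained, the supremum over all 1-Lipschitz functions f : ℝⁿ → ℝ of ∫ f dμ − ∫ f dν is attained, and the two optimal values are equal. -/
open MeasureTheory

/-!
Let `N h` be the infimum of `∫ φ dμ + ∫ ψ dν` over separated functions `φ x + ψ y ≥ h`. It is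
sublinear, so by Hahn–Banach some linear `Λ ≤ N` agrees with `N` at `-dist`; such a `Λ` is positive
and has marginals `μ` and `ν`, and `Λ dist` is the dual value.

The distances to a dense sequence, truncated, embed `X` into a compact space `K`. On `C(K × K)` the
functional is a measure by Riesz–Markov, and since its marginals are carried by the measurable
image of `X`, this measure lives on `X × X`. As `dist` is a supremum of restrictions of functions in
`C(K × K)`, monotone convergence bounds the cost of the resulting coupling `π` by `Λ dist`. This is
the hard inequality, and `π` is optimal.

For 1-Lipschitz functions `gₖ` approaching the dual value, the slack
`dist x y - (gₖ x - gₖ y) ≥ 0` tends to zero in `L¹(π)`, hence `π`-almost everywhere along a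
subsequence. A pointwise ultrafilter limit of `gₖ - gₖ x₀` then has zero slack `π`-almost
everywhere, so it is optimal.
-/

open Filter Set Topology
open scoped NNReal Pointwise

section HahnBanach

variable {E : Type*} [AddCommGroup E] [Module ℝ E] {N : E → ℝ}

theorem map_zero_of_positively_homogeneous
    (N_hom : ∀ c : ℝ, 0 < c → ∀ x, N (c • x) = c * N x) : N 0 = 0 := by
  have h_double := N_hom 2 two_pos 0
  rw [smul_zero] at h_double
  linarith

theorem mul_le_map_smul_of_sublinear (N_hom : ∀ c : ℝ, 0 < c → ∀ x, N (c • x) = c * N x)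
    (N_add : ∀ x y, N (x + y) ≤ N x + N y) (c : ℝ) (x : E) : c * N x ≤ N (c • x) := by
  have N_zero := map_zero_of_positively_homogeneous N_hom
  rcases lt_trichotomy c 0 with hc | rfl | hc
  · have h_cancel := N_add (c • x) ((-c) • x)
    rw [← add_smul, add_neg_cancel, zero_smul, N_zero, N_hom (-c) (neg_pos.2 hc)] at h_cancel
    linarith
  · rw [zero_mul, zero_smul, N_zero]
  · exact (N_hom c hc x).ge

theorem exists_linearMap_le_sublinear_apply_eq
    (N_hom : ∀ c : ℝ, 0 < c → ∀ x, N (c • x) = c * N x)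
    (N_add : ∀ x y, N (x + y) ≤ N x + N y) (x₀ : E) :
    ∃ g : E →ₗ[ℝ] ℝ, (∀ x, g x ≤ N x) ∧ g x₀ = N x₀ := by
  have mul_le (c : ℝ) : c * N x₀ ≤ N (c • x₀) := mul_le_map_smul_of_sublinear N_hom N_add c x₀
  have h_ker (c : ℝ) (hc : c • x₀ = 0) : c • N x₀ = 0 := by
    have N_zero := map_zero_of_positively_homogeneous N_hom
    have h_neg := mul_le (-c)
    rw [neg_smul, hc, neg_zero, N_zero, neg_mul, neg_nonpos] at h_neg
    exact le_antisymm ((mul_le c).trans_eq (by rw [hc, N_zero])) h_neg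
  let f : E →ₗ.[ℝ] ℝ := LinearPMap.mkSpanSingleton' x₀ (N x₀) h_ker
  obtain ⟨g, hg_ext, hg_le⟩ := exists_extension_of_le_sublinear f N N_hom N_add <| by
    rintro ⟨_, hx⟩
    obtain ⟨c, rfl⟩ := Submodule.mem_span_singleton.1 hx
    exact (LinearPMap.mkSpanSingleton'_apply x₀ (N x₀) h_ker c hx).trans_le (mul_le c)
  have hx₀ : x₀ ∈ f.domain := Submodule.mem_span_singleton_self x₀
  exact ⟨g, hg_le, (hg_ext ⟨x₀, hx₀⟩).trans (LinearPMap.mkSpanSingleton'_apply_self _ _ _ _)⟩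

end HahnBanach

/-- A coupling (transport plan) of `μ` and `ν`: a measure on the product with these marginals.
It is automatically a probability measure when `μ` is one. -/
structure IsCoupling {X Y : Type*} [MeasurableSpace X] [MeasurableSpace Y]
    (π : Measure (X × Y)) (μ : Measure X) (ν : Measure Y) : Prop where
  map_fst : π.map Prod.fst = μ
  map_snd : π.map Prod.snd = ν

namespace IsCoupling

variable {X Y : Type*} [MeasurableSpace X] [MeasurableSpace Y]
  {π : Measure (X × Y)} {μ : Measure X} {ν : Measure Y}

theorem prod (μ : Measure X) (ν : Measure Y) [IsProbabilityMeasure μ] [IsProbabilityMeasure ν] :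
    IsCoupling (μ.prod ν) μ ν :=
  ⟨measurePreserving_fst.map_eq, measurePreserving_snd.map_eq⟩

theorem measurePreserving_fst (h : IsCoupling π μ ν) : MeasurePreserving Prod.fst π μ :=
  ⟨measurable_fst, h.map_fst⟩

theorem measurePreserving_snd (h : IsCoupling π μ ν) : MeasurePreserving Prod.snd π ν :=
  ⟨measurable_snd, h.map_snd⟩

theorem isProbabilityMeasure [IsProbabilityMeasure μ] (h : IsCoupling π μ ν) :
    IsProbabilityMeasure π := by
  rw [← Measure.isProbabilityMeasure_map_iff measurable_fst.aemeasurable, h.map_fst]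
  infer_instance

variable {φ : X → ℝ} {ψ : Y → ℝ}

theorem integrable_comp_fst (h : IsCoupling π μ ν) (hφ : Integrable φ μ) :
    Integrable (fun p : X × Y => φ p.1) π :=
  h.measurePreserving_fst.integrable_comp_of_integrable hφ

theorem integrable_comp_snd (h : IsCoupling π μ ν) (hψ : Integrable ψ ν) :
    Integrable (fun p : X × Y => ψ p.2) π :=
  h.measurePreserving_snd.integrable_comp_of_integrable hψ

theorem integral_comp_fst (h : IsCoupling π μ ν) (hφ : AEStronglyMeasurable φ μ) :
    ∫ p, φ p.1 ∂π = ∫ x, φ x ∂μ := by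
  rw [← h.map_fst] at hφ ⊢
  exact (integral_map measurable_fst.aemeasurable hφ).symm

theorem integral_comp_snd (h : IsCoupling π μ ν) (hψ : AEStronglyMeasurable ψ ν) :
    ∫ p, ψ p.2 ∂π = ∫ y, ψ y ∂ν := by
  rw [← h.map_snd] at hψ ⊢
  exact (integral_map measurable_snd.aemeasurable hψ).symm

theorem integral_comp_fst_add_comp_snd (h : IsCoupling π μ ν) (hφ : Integrable φ μ)
    (hψ : Integrable ψ ν) : ∫ p, (φ p.1 + ψ p.2) ∂π = ∫ x, φ x ∂μ + ∫ y, ψ y ∂ν := by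
  rw [integral_add (h.integrable_comp_fst hφ) (h.integrable_comp_snd hψ),
    h.integral_comp_fst hφ.1, h.integral_comp_snd hψ.1]

theorem integral_comp_fst_sub_comp_snd (h : IsCoupling π μ ν) (hφ : Integrable φ μ)
    (hψ : Integrable ψ ν) : ∫ p, (φ p.1 - ψ p.2) ∂π = ∫ x, φ x ∂μ - ∫ y, ψ y ∂ν := by
  rw [integral_sub (h.integrable_comp_fst hφ) (h.integrable_comp_snd hψ),
    h.integral_comp_fst hφ.1, h.integral_comp_snd hψ.1]

theorem exists_map_prodMap_eq {K L : Type*} [MeasurableSpace K] [MeasurableSpace L]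
    [Nonempty X] [Nonempty Y] {ρ : Measure (K × L)} {ι : X → K} {κ : Y → L}
    (hι : MeasurableEmbedding ι) (hκ : MeasurableEmbedding κ)
    (hρ : IsCoupling ρ (μ.map ι) (ν.map κ)) :
    ∃ π, IsCoupling π μ ν ∧ π.map (Prod.map ι κ) = ρ := by
  obtain ⟨r, hr, hrι⟩ := hι.exists_measurable_extend measurable_id fun _ => inferInstance
  obtain ⟨s, hs, hsκ⟩ := hκ.exists_measurable_extend measurable_id fun _ => inferInstance
  have ae_fst : ∀ᵐ p ∂ρ, ι (r p.1) = p.1 := by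
    refine hρ.measurePreserving_fst.quasiMeasurePreserving.ae (p := fun u => ι (r u) = u) ?_
    exact hι.ae_map_iff.2 (ae_of_all _ fun x => congrArg ι (congrFun hrι x))
  have ae_snd : ∀ᵐ p ∂ρ, κ (s p.2) = p.2 := by
    refine hρ.measurePreserving_snd.quasiMeasurePreserving.ae (p := fun u => κ (s u) = u) ?_
    exact hκ.ae_map_iff.2 (ae_of_all _ fun y => congrArg κ (congrFun hsκ y))
  refine ⟨ρ.map (Prod.map r s), ⟨?_, ?_⟩, ?_⟩
  · calc (ρ.map (Prod.map r s)).map Prod.fst = (ρ.map Prod.fst).map r := by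
          rw [Measure.map_map measurable_fst (hr.prodMap hs), Measure.map_map hr measurable_fst]
          rfl
      _ = μ := by rw [hρ.map_fst, Measure.map_map hr hι.measurable, hrι, Measure.map_id]
  · calc (ρ.map (Prod.map r s)).map Prod.snd = (ρ.map Prod.snd).map s := by
          rw [Measure.map_map measurable_snd (hr.prodMap hs), Measure.map_map hs measurable_snd]
          rfl
      _ = ν := by rw [hρ.map_snd, Measure.map_map hs hκ.measurable, hsκ, Measure.map_id]
  · rw [Measure.map_map (hι.measurable.prodMap hκ.measurable) (hr.prodMap hs)]
    have ae_id : Prod.map ι κ ∘ Prod.map r s =ᵐ[ρ] id := by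
      filter_upwards [ae_fst, ae_snd] with p h₁ h₂ using Prod.ext h₁ h₂
    rw [Measure.map_congr ae_id, Measure.map_id]

end IsCoupling

section MarginalBounds

variable {X Y : Type*} [MeasurableSpace X] [MeasurableSpace Y] {μ : Measure X} {ν : Measure Y}

/-- The values `∫ φ dμ + ∫ ψ dν` of the integrable separated functions `φ x + ψ y` lying above `h`.
By duality their infimum is the largest integral of `h` against a coupling. -/
def marginalBounds (μ : Measure X) (ν : Measure Y) (h : X × Y → ℝ) : Set ℝ :=
  {r | ∃ (φ : X → ℝ) (ψ : Y → ℝ), Integrable φ μ ∧ Integrable ψ ν ∧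
    (∀ x y, h (x, y) ≤ φ x + ψ y) ∧ ∫ x, φ x ∂μ + ∫ y, ψ y ∂ν = r}

/-- The functions on `X × Y` bounded in absolute value by an integrable separated function
`φ x + ψ y`, on which every coupling of `μ` and `ν` acts. No measurability is required. -/
def marginallyDominated (μ : Measure X) (ν : Measure Y) : Submodule ℝ (X × Y → ℝ) where
  carrier := {h | ∃ (φ : X → ℝ) (ψ : Y → ℝ), Integrable φ μ ∧ Integrable ψ ν ∧
    ∀ x y, |h (x, y)| ≤ φ x + ψ y}
  zero_mem' := ⟨0, 0, integrable_zero _ _ _, integrable_zero _ _ _, by simp⟩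
  add_mem' := by
    rintro h h' ⟨φ, ψ, hφ, hψ, hle⟩ ⟨φ', ψ', hφ', hψ', hle'⟩
    refine ⟨φ + φ', ψ + ψ', hφ.add hφ', hψ.add hψ', fun x y => ?_⟩
    calc |h (x, y) + h' (x, y)| ≤ |h (x, y)| + |h' (x, y)| := abs_add_le _ _
      _ ≤ (φ x + ψ y) + (φ' x + ψ' y) := add_le_add (hle x y) (hle' x y)
      _ = (φ + φ') x + (ψ + ψ') y := add_add_add_comm _ _ _ _
  smul_mem' := by
    rintro c h ⟨φ, ψ, hφ, hψ, hle⟩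
    refine ⟨|c| • φ, |c| • ψ, hφ.smul _, hψ.smul _, fun x y => ?_⟩
    calc |c * h (x, y)| = |c| * |h (x, y)| := abs_mul _ _
      _ ≤ |c| * (φ x + ψ y) := mul_le_mul_of_nonneg_left (hle x y) (abs_nonneg c)
      _ = (|c| • φ) x + (|c| • ψ) y := mul_add _ _ _

theorem add_marginalBounds_subset (h h' : X × Y → ℝ) :
    marginalBounds μ ν h + marginalBounds μ ν h' ⊆ marginalBounds μ ν (h + h') := by
  rintro _ ⟨_, ⟨φ, ψ, hφ, hψ, hle, rfl⟩, _, ⟨φ', ψ', hφ', hψ', hle', rfl⟩, rfl⟩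
  refine ⟨φ + φ', ψ + ψ', hφ.add hφ', hψ.add hψ', fun x y => ?_, ?_⟩
  · exact (add_le_add (hle x y) (hle' x y)).trans_eq (add_add_add_comm _ _ _ _)
  · rw [integral_add' hφ hφ', integral_add' hψ hψ', add_add_add_comm]

theorem smul_marginalBounds_subset {c : ℝ} (hc : 0 ≤ c) (h : X × Y → ℝ) :
    c • marginalBounds μ ν h ⊆ marginalBounds μ ν (c • h) := by
  rintro _ ⟨_, ⟨φ, ψ, hφ, hψ, hle, rfl⟩, rfl⟩
  refine ⟨c • φ, c • ψ, hφ.smul c, hψ.smul c, fun x y => ?_, ?_⟩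
  · exact (mul_le_mul_of_nonneg_left (hle x y) hc).trans_eq (mul_add _ _ _)
  · simp only [Pi.smul_apply, integral_smul, smul_add]

theorem marginalBounds_smul {c : ℝ} (hc : 0 < c) (h : X × Y → ℝ) :
    marginalBounds μ ν (c • h) = c • marginalBounds μ ν h := by
  refine Subset.antisymm ?_ (smul_marginalBounds_subset hc.le h)
  rw [subset_smul_set_iff₀ hc.ne']
  simpa only [inv_smul_smul₀ hc.ne'] using
    smul_marginalBounds_subset (μ := μ) (ν := ν) (inv_pos.2 hc).le (c • h)

theorem marginalBounds_nonempty {h : X × Y → ℝ} (hh : h ∈ marginallyDominated μ ν) :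
    (marginalBounds μ ν h).Nonempty := by
  obtain ⟨φ, ψ, hφ, hψ, hle⟩ := hh
  exact ⟨_, φ, ψ, hφ, hψ, fun x y => (le_abs_self _).trans (hle x y), rfl⟩

theorem nonneg_of_mem_marginalBounds_zero [IsProbabilityMeasure μ] [IsProbabilityMeasure ν]
    {r : ℝ} (hr : r ∈ marginalBounds μ ν 0) : 0 ≤ r := by
  obtain ⟨φ, ψ, hφ, hψ, hle, rfl⟩ := hr
  rw [← (IsCoupling.prod μ ν).integral_comp_fst_add_comp_snd hφ hψ]
  exact integral_nonneg fun p => hle p.1 p.2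

theorem marginalBounds_bddBelow [IsProbabilityMeasure μ] [IsProbabilityMeasure ν]
    {h : X × Y → ℝ} (hh : h ∈ marginallyDominated μ ν) :
    BddBelow (marginalBounds μ ν h) := by
  obtain ⟨s, hs⟩ := marginalBounds_nonempty (neg_mem hh)
  refine ⟨-s, fun r hr => neg_le_iff_add_nonneg.2 ?_⟩
  have h_sum : r + s ∈ marginalBounds μ ν (h + -h) :=
    add_marginalBounds_subset h (-h) (add_mem_add hr hs)
  rw [add_neg_cancel] at h_sum
  exact nonneg_of_mem_marginalBounds_zero h_sum

/-- Functionals below every marginal bound: the finitely additive analogue of couplings, acting on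
functions that need not be measurable. -/
def IsCouplingFunctional (Λ : marginallyDominated μ ν →ₗ[ℝ] ℝ) : Prop :=
  ∀ h : marginallyDominated μ ν, Λ h ∈ lowerBounds (marginalBounds μ ν h)

theorem exists_isCouplingFunctional_isGLB [IsProbabilityMeasure μ] [IsProbabilityMeasure ν]
    (h₀ : marginallyDominated μ ν) :
    ∃ Λ : marginallyDominated μ ν →ₗ[ℝ] ℝ,
      IsCouplingFunctional Λ ∧ IsGLB (marginalBounds μ ν h₀) (Λ h₀) := by
  have h_glb (h : marginallyDominated μ ν) :
      IsGLB (marginalBounds μ ν h) (sInf (marginalBounds μ ν h)) :=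
    isGLB_csInf (marginalBounds_nonempty h.2) (marginalBounds_bddBelow h.2)
  obtain ⟨Λ, hΛ_le, hΛ_eq⟩ := exists_linearMap_le_sublinear_apply_eq
    (N := fun h : marginallyDominated μ ν => sInf (marginalBounds μ ν h))
    (fun c hc h => by
      rw [Submodule.coe_smul, marginalBounds_smul hc, Real.sInf_smul_of_nonneg hc.le, smul_eq_mul])
    (fun h h' => by
      rw [← csInf_add (marginalBounds_nonempty h.2) (marginalBounds_bddBelow h.2)
        (marginalBounds_nonempty h'.2) (marginalBounds_bddBelow h'.2)]
      exact csInf_le_csInf (marginalBounds_bddBelow (h + h').2)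
        ((marginalBounds_nonempty h.2).add (marginalBounds_nonempty h'.2))
        (add_marginalBounds_subset _ _)) h₀
  exact ⟨Λ, fun h r hr => (hΛ_le h).trans ((h_glb h).1 hr), hΛ_eq ▸ h_glb h₀⟩

end MarginalBounds

namespace IsCouplingFunctional

variable {X Y : Type*} [MeasurableSpace X] [MeasurableSpace Y] {μ : Measure X} {ν : Measure Y}
  {Λ : marginallyDominated μ ν →ₗ[ℝ] ℝ}

theorem map_nonneg (hΛ : IsCouplingFunctional Λ) {h : marginallyDominated μ ν}
    (hh : ∀ p, 0 ≤ (h : X × Y → ℝ) p) : 0 ≤ Λ h := by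
  have h_neg : Λ (-h) ≤ 0 := hΛ (-h) ⟨0, 0, integrable_zero _ _ _, integrable_zero _ _ _,
    fun x y => by simpa using hh (x, y), by simp⟩
  rwa [map_neg, neg_nonpos] at h_neg

theorem map_eq_integral_add_integral (hΛ : IsCouplingFunctional Λ)
    {h : marginallyDominated μ ν} {φ : X → ℝ} {ψ : Y → ℝ} (hφ : Integrable φ μ)
    (hψ : Integrable ψ ν) (hh : ∀ x y, (h : X × Y → ℝ) (x, y) = φ x + ψ y) :
    Λ h = ∫ x, φ x ∂μ + ∫ y, ψ y ∂ν := by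
  have h_neg : Λ (-h) ≤ -(∫ x, φ x ∂μ + ∫ y, ψ y ∂ν) := hΛ (-h) ⟨-φ, -ψ, hφ.neg, hψ.neg,
    fun x y => by simp [hh, add_comm], by simp [integral_neg, add_comm]⟩
  rw [map_neg, neg_le_neg_iff] at h_neg
  exact le_antisymm (hΛ h ⟨φ, ψ, hφ, hψ, fun x y => (hh x y).le, rfl⟩) h_neg

end IsCouplingFunctional

section Riesz

open CompactlySupported

theorem exists_isFiniteMeasure_integral_eq {K : Type*} [TopologicalSpace K] [CompactSpace K]
    [T2Space K] [MeasurableSpace K] [BorelSpace K] (Λ : C(K, ℝ) →ₗ[ℝ] ℝ)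
    (hΛ : ∀ h, 0 ≤ h → 0 ≤ Λ h) :
    ∃ π : Measure K, IsFiniteMeasure π ∧ ∀ h : C(K, ℝ), ∫ u, h u ∂π = Λ h := by
  let Λc : C_c(K, ℝ) →ₚ[ℝ] ℝ := PositiveLinearMap.mk₀
    { toFun := fun h => Λ h
      map_add' := fun h h' => map_add Λ (h : C(K, ℝ)) h'
      map_smul' := fun c h => map_smul Λ c (h : C(K, ℝ)) }
    fun h hh => hΛ h hh
  exact ⟨RealRMK.rieszMeasure Λc, inferInstance, fun h =>
    RealRMK.integral_rieszMeasure Λc (CompactlySupportedContinuousMap.continuousMapEquiv h)⟩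

variable {K L : Type*} [TopologicalSpace K] [CompactSpace K] [TopologicalSpace.MetrizableSpace K]
  [MeasurableSpace K] [BorelSpace K] [TopologicalSpace L] [CompactSpace L]
  [TopologicalSpace.MetrizableSpace L] [MeasurableSpace L] [BorelSpace L]

theorem exists_isCoupling_integral_eq (μ : Measure K) (ν : Measure L)
    [IsFiniteMeasure μ] [IsFiniteMeasure ν] (Λ : C(K × L, ℝ) →ₗ[ℝ] ℝ)
    (hΛ : ∀ h, 0 ≤ h → 0 ≤ Λ h)
    (h_fst : ∀ f : C(K, ℝ), Λ (f.comp .fst) = ∫ u, f u ∂μ)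
    (h_snd : ∀ f : C(L, ℝ), Λ (f.comp .snd) = ∫ v, f v ∂ν) :
    ∃ π, IsCoupling π μ ν ∧ ∀ h : C(K × L, ℝ), ∫ p, h p ∂π = Λ h := by
  obtain ⟨π, hπ_fin, hπ⟩ := exists_isFiniteMeasure_integral_eq Λ hΛ
  refine ⟨π, ⟨?_, ?_⟩, hπ⟩
  · refine ext_of_forall_integral_eq_of_IsFiniteMeasure fun f => ?_
    rw [integral_map measurable_fst.aemeasurable f.continuous.aestronglyMeasurable]
    exact (hπ (f.toContinuousMap.comp .fst)).trans (h_fst f.toContinuousMap)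
  · refine ext_of_forall_integral_eq_of_IsFiniteMeasure fun f => ?_
    rw [integral_map measurable_snd.aemeasurable f.continuous.aestronglyMeasurable]
    exact (hπ (f.toContinuousMap.comp .snd)).trans (h_snd f.toContinuousMap)

variable {X Y : Type*} [MeasurableSpace X] [MeasurableSpace Y]

/-- The restriction to `X × Y` of continuous functions on a compactification `K × L`, where `X` and
`Y` are mapped into `K` and `L` by arbitrary maps `ι` and `κ`. -/
def restrictContinuousMap (μ : Measure X) (ν : Measure Y) [IsFiniteMeasure μ]
    (ι : X → K) (κ : Y → L) : C(K × L, ℝ) →ₗ[ℝ] marginallyDominated μ ν where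
  toFun h := ⟨fun p => h (ι p.1, κ p.2), fun _ => ‖h‖, 0, integrable_const _,
    integrable_zero _ _ _, fun x y => by simpa using h.norm_coe_le_norm (ι x, κ y)⟩
  map_add' _ _ := rfl
  map_smul' _ _ := rfl

theorem exists_isCoupling_integral_eq_restrictContinuousMap
    {μ : Measure X} {ν : Measure Y} [IsProbabilityMeasure μ] [IsProbabilityMeasure ν]
    {Λ : marginallyDominated μ ν →ₗ[ℝ] ℝ} (hΛ : IsCouplingFunctional Λ)
    {ι : X → K} {κ : Y → L} (hι : MeasurableEmbedding ι) (hκ : MeasurableEmbedding κ) :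
    ∃ π, IsCoupling π μ ν ∧ ∀ h : C(K × L, ℝ),
      ∫ p, h (ι p.1, κ p.2) ∂π = Λ (restrictContinuousMap μ ν ι κ h) := by
  have hX : Nonempty X := nonempty_of_isProbabilityMeasure μ
  have hY : Nonempty Y := nonempty_of_isProbabilityMeasure ν
  have integrable_comp_ι (f : C(K, ℝ)) : Integrable (fun x => f (ι x)) μ :=
    .of_bound (f.continuous.measurable.comp hι.measurable).aestronglyMeasurable ‖f‖
      (ae_of_all _ fun x => f.norm_coe_le_norm (ι x))
  have integrable_comp_κ (f : C(L, ℝ)) : Integrable (fun y => f (κ y)) ν :=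
    .of_bound (f.continuous.measurable.comp hκ.measurable).aestronglyMeasurable ‖f‖
      (ae_of_all _ fun y => f.norm_coe_le_norm (κ y))
  obtain ⟨ρ, hρ, hρ_int⟩ := exists_isCoupling_integral_eq (μ.map ι) (ν.map κ)
    (Λ ∘ₗ restrictContinuousMap μ ν ι κ)
    (fun h hh => hΛ.map_nonneg fun p => hh _)
    (fun f => by
      rw [hι.integral_map, LinearMap.comp_apply, hΛ.map_eq_integral_add_integral
        (integrable_comp_ι f) (integrable_zero _ _ _) fun x y => (add_zero _).symm]
      simp)
    (fun f => by
      rw [hκ.integral_map, LinearMap.comp_apply, hΛ.map_eq_integral_add_integral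
        (integrable_zero _ _ _) (integrable_comp_κ f) fun x y => (zero_add _).symm]
      simp)
  obtain ⟨π, hπ, rfl⟩ := hρ.exists_map_prodMap_eq hι hκ
  refine ⟨π, hπ, fun h => ?_⟩
  rw [← LinearMap.comp_apply, ← hρ_int, integral_map
    (hι.measurable.prodMap hκ.measurable).aemeasurable h.continuous.aestronglyMeasurable]
  rfl

end Riesz

section TruncatedDist

variable {X : Type*} [PseudoMetricSpace X] [TopologicalSpace.SeparableSpace X] [Nonempty X]

/-- The compact product of the intervals `[0, m]`, with countably many copies of each: the target of
the compactification `truncatedDist`. -/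
abbrev TruncationCube : Type :=
  ∀ j : ℕ × ℕ, Icc (0 : ℝ) j.2

/-- The coordinates `min (dist x xᵢ) m`, for a dense sequence `xᵢ` and `m : ℕ`, which map `X` into a
compact space. Truncation at all levels `m` makes every coordinate bounded and loses no distance. -/
noncomputable def truncatedDist (x : X) : TruncationCube := fun j =>
  projIcc 0 (j.2 : ℝ) j.2.cast_nonneg (dist x (TopologicalSpace.denseSeq X j.1))

theorem lipschitzWith_truncatedDist (j : ℕ × ℕ) :
    LipschitzWith 1 fun x : X => truncatedDist x j := by
  have h_comp := (LipschitzWith.projIcc (Nat.cast_nonneg (α := ℝ) j.2)).comp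
    (LipschitzWith.dist_left (TopologicalSpace.denseSeq X j.1))
  rw [mul_one] at h_comp
  exact h_comp

theorem continuous_truncatedDist : Continuous (truncatedDist (X := X)) :=
  continuous_pi fun j => (lipschitzWith_truncatedDist j).continuous

theorem edist_truncatedDist_le (x y : X) (j : ℕ × ℕ) :
    edist (truncatedDist x j) (truncatedDist y j) ≤ edist x y := by
  simpa using lipschitzWith_truncatedDist j x y

theorem iSup_edist_truncatedDist (x y : X) :
    ⨆ j, edist (truncatedDist x j) (truncatedDist y j) = edist x y := by
  set S := ⨆ j, edist (truncatedDist x j) (truncatedDist y j)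
  refine le_antisymm (iSup_le (edist_truncatedDist_le x y)) ?_
  have h_dense (i : ℕ) : edist (dist x (TopologicalSpace.denseSeq X i))
      (dist y (TopologicalSpace.denseSeq X i)) ≤ S := by
    obtain ⟨m, hm⟩ := exists_nat_ge (max (dist x (TopologicalSpace.denseSeq X i))
      (dist y (TopologicalSpace.denseSeq X i)))
    refine le_iSup_of_le (i, m) (le_of_eq ?_)
    rw [Subtype.edist_eq, truncatedDist, truncatedDist,
      projIcc_of_mem _ ⟨dist_nonneg, (le_max_left _ _).trans hm⟩,
      projIcc_of_mem _ ⟨dist_nonneg, (le_max_right _ _).trans hm⟩]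
  have h_all (z : X) : edist (dist x z) (dist y z) ≤ S :=
    (TopologicalSpace.denseRange_denseSeq X).induction_on z
      (isClosed_le (by fun_prop) continuous_const) h_dense
  simpa [edist_dist] using h_all y

theorem injective_truncatedDist {X : Type*} [MetricSpace X] [TopologicalSpace.SeparableSpace X]
    [Nonempty X] : Function.Injective (truncatedDist (X := X)) := fun x y hxy => by
  rw [← edist_eq_zero, ← iSup_edist_truncatedDist, hxy]
  simp

/-- The largest difference of the coordinates in `s`, a continuous function on the compactification
which increases to the distance on `X` as `s` exhausts the coordinates. -/
noncomputable def coordinateDist (s : Finset (ℕ × ℕ)) :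
    C(TruncationCube × TruncationCube, ℝ) where
  toFun p := (s.sup fun j => nndist (p.1 j) (p.2 j) : ℝ≥0)
  continuous_toFun := NNReal.continuous_coe.comp <|
    Continuous.finset_sup_apply fun j _ => by fun_prop

theorem ofReal_coordinateDist (s : Finset (ℕ × ℕ)) (u v : TruncationCube) :
    ENNReal.ofReal (coordinateDist s (u, v)) = s.sup fun j => edist (u j) (v j) := by
  simp only [coordinateDist, ContinuousMap.coe_mk, ENNReal.ofReal_coe_nnreal,
    ENNReal.coe_finset_sup, edist_nndist]

theorem coordinateDist_nonneg (s : Finset (ℕ × ℕ)) (p : TruncationCube × TruncationCube) :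
    0 ≤ coordinateDist s p :=
  NNReal.coe_nonneg _

theorem iSup_ofReal_coordinateDist_truncatedDist (x y : X) :
    ⨆ s, ENNReal.ofReal (coordinateDist s (truncatedDist x, truncatedDist y)) = edist x y := by
  simp only [ofReal_coordinateDist, Finset.sup_eq_iSup]
  rw [← iSup_eq_iSup_finset, iSup_edist_truncatedDist]

theorem coordinateDist_truncatedDist_le_dist (s : Finset (ℕ × ℕ)) (x y : X) :
    coordinateDist s (truncatedDist x, truncatedDist y) ≤ dist x y := by
  rw [← ENNReal.ofReal_le_ofReal_iff dist_nonneg, ← edist_dist,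
    ← iSup_ofReal_coordinateDist_truncatedDist x y]
  exact le_iSup (fun t => ENNReal.ofReal (coordinateDist t (truncatedDist x, truncatedDist y))) s

end TruncatedDist

section LipschitzFunctions

theorem exists_strictMono_ae_tendsto_zero {α : Type*} [MeasurableSpace α] {π : Measure α}
    {u : ℕ → α → ℝ} (hu_int : ∀ k, Integrable (u k) π) (hu_nonneg : ∀ k, 0 ≤ u k)
    (hu_lim : Tendsto (fun k => ∫ a, u k a ∂π) atTop (𝓝 0)) :
    ∃ n : ℕ → ℕ, StrictMono n ∧ ∀ᵐ a ∂π, Tendsto (fun k => u (n k) a) atTop (𝓝 0) := by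
  have h_norm (k : ℕ) : eLpNorm (u k - 0) 1 π = ENNReal.ofReal (∫ a, u k a ∂π) := by
    rw [sub_zero, eLpNorm_one_eq_lintegral_enorm,
      ofReal_integral_eq_lintegral_ofReal (hu_int k) (ae_of_all _ (hu_nonneg k))]
    exact lintegral_congr fun a => Real.enorm_of_nonneg (hu_nonneg k a)
  have h_tendsto : Tendsto (fun k => eLpNorm (u k - 0) 1 π) atTop (𝓝 0) := by
    simpa only [h_norm, ENNReal.ofReal_zero] using ENNReal.tendsto_ofReal hu_lim
  exact (tendstoInMeasure_of_tendsto_eLpNorm one_ne_zero (fun k => (hu_int k).1)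
    aestronglyMeasurable_zero h_tendsto).exists_seq_tendsto_ae

variable {X : Type*} [PseudoMetricSpace X]

theorem sub_le_dist_of_lipschitzWith_one {g : X → ℝ} (hg : LipschitzWith 1 g) (x y : X) :
    g x - g y ≤ dist x y := by
  simpa only [NNReal.coe_one, one_mul, sub_le_iff_le_add'] using hg.le_add_mul x y

theorem exists_lipschitzWith_between {a b : X → ℝ} (hab : ∀ x y, a x ≤ b y + dist x y) :
    ∃ g : X → ℝ, LipschitzWith 1 g ∧ a ≤ g ∧ g ≤ b := by
  have h_bdd (x : X) : BddBelow (range fun y => b y + dist x y) :=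
    ⟨a x, by rintro _ ⟨y, rfl⟩; exact hab x y⟩
  refine ⟨fun x => ⨅ y, (b y + dist x y), LipschitzWith.of_le_add fun x x' => ?_, fun x => ?_,
    fun x => (ciInf_le (h_bdd x) x).trans_eq (by rw [dist_self, add_zero])⟩
  · have : Nonempty X := ⟨x⟩
    rw [← sub_le_iff_le_add]
    refine le_ciInf fun y => sub_le_iff_le_add.2 ((ciInf_le (h_bdd x) y).trans ?_)
    linarith [dist_triangle x x' y]
  · have : Nonempty X := ⟨x⟩
    exact le_ciInf (hab x)

theorem exists_lipschitzWith_tendsto_sub [Nonempty X] {ι : Type*} (U : Ultrafilter ι) {C : ℝ≥0}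
    {g : ι → X → ℝ} (hg : ∀ i, LipschitzWith C (g i)) :
    ∃ f : X → ℝ, LipschitzWith C f ∧
      ∀ x y, Tendsto (fun i => g i x - g i y) U (𝓝 (f x - f y)) := by
  obtain ⟨x₀⟩ := ‹Nonempty X›
  have h_lim (x : X) : ∃ l, Tendsto (fun i => g i x - g i x₀) U (𝓝 l) := by
    obtain ⟨l, -, hl⟩ := (isCompact_closedBall (0 : ℝ) (C * dist x x₀)).ultrafilter_le_nhds
      (U.map fun i => g i x - g i x₀) (by
        rw [Ultrafilter.coe_map, le_principal_iff]
        exact mem_map.2 <| univ_mem' fun i => by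
          simpa [← Real.dist_eq] using (hg i).dist_le_mul x x₀)
    exact ⟨l, hl⟩
  choose f hf using h_lim
  have hf_sub (x y : X) : Tendsto (fun i => g i x - g i y) U (𝓝 (f x - f y)) := by
    simpa only [sub_sub_sub_cancel_right] using (hf x).sub (hf y)
  refine ⟨f, LipschitzWith.of_dist_le_mul fun x y => ?_, hf_sub⟩
  exact le_of_tendsto' (hf_sub x y).abs fun i => (hg i).dist_le_mul x y

variable [MeasurableSpace X]

theorem exists_lipschitzWith_ae_dist_eq_sub [Nonempty X] {π : Measure (X × X)} {g : ℕ → X → ℝ}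
    (hg : ∀ k, LipschitzWith 1 (g k))
    (hg_int : ∀ k, Integrable (fun p : X × X => dist p.1 p.2 - (g k p.1 - g k p.2)) π)
    (hg_lim : Tendsto (fun k => ∫ p, (dist p.1 p.2 - (g k p.1 - g k p.2)) ∂π) atTop (𝓝 0)) :
    ∃ f : X → ℝ, LipschitzWith 1 f ∧ ∀ᵐ p ∂π, dist p.1 p.2 = f p.1 - f p.2 := by
  obtain ⟨n, -, hn⟩ := exists_strictMono_ae_tendsto_zero hg_int
    (fun k p => sub_nonneg.2 (sub_le_dist_of_lipschitzWith_one (hg k) p.1 p.2)) hg_lim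
  obtain ⟨f, hf, hf_lim⟩ :=
    exists_lipschitzWith_tendsto_sub (hyperfilter ℕ) fun k => hg (n k)
  refine ⟨f, hf, hn.mono fun p hp => sub_eq_zero.1 ?_⟩
  exact tendsto_nhds_unique (tendsto_const_nhds.sub (hf_lim p.1 p.2))
    (hp.mono_left Nat.hyperfilter_le_atTop)

theorem integrable_of_lipschitzWith [OpensMeasurableSpace X] {μ : Measure X} [IsFiniteMeasure μ]
    {x₀ : X} (hμ : Integrable (fun x => dist x x₀) μ) {C : ℝ≥0} {g : X → ℝ}
    (hg : LipschitzWith C g) : Integrable g μ := by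
  refine ((hμ.const_mul (C : ℝ)).add (integrable_const |g x₀|)).mono'
    hg.continuous.measurable.aestronglyMeasurable (ae_of_all _ fun x => ?_)
  calc |g x| = |g x - g x₀ + g x₀| := by rw [sub_add_cancel]
    _ ≤ |g x - g x₀| + |g x₀| := abs_add_le _ _
    _ ≤ C * dist x x₀ + |g x₀| := by gcongr; exact hg.dist_le_mul x x₀

theorem dist_mem_marginallyDominated {μ ν : Measure X} {x₀ : X}
    (hμ : Integrable (fun x => dist x x₀) μ) (hν : Integrable (fun x => dist x x₀) ν) :
    (fun p : X × X => dist p.1 p.2) ∈ marginallyDominated μ ν :=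
  ⟨_, _, hμ, hν, fun x y => by simpa only [abs_dist] using dist_triangle_right x y x₀⟩

variable [SecondCountableTopology X] [OpensMeasurableSpace X]
  {μ ν : Measure X} {π : Measure (X × X)} {x₀ : X} {g : X → ℝ}

theorem IsCoupling.integrable_dist (hπ : IsCoupling π μ ν)
    (hμ : Integrable (fun x => dist x x₀) μ) (hν : Integrable (fun x => dist x x₀) ν) :
    Integrable (fun p : X × X => dist p.1 p.2) π :=
  ((hπ.integrable_comp_fst hμ).add (hπ.integrable_comp_snd hν)).mono'
    (by fun_prop) (ae_of_all _ fun p => by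
      simpa only [Real.norm_eq_abs, abs_dist, Pi.add_apply] using dist_triangle_right p.1 p.2 x₀)

variable [IsFiniteMeasure μ] [IsFiniteMeasure ν]

theorem IsCoupling.integral_sub_integral_le (hπ : IsCoupling π μ ν)
    (hμ : Integrable (fun x => dist x x₀) μ) (hν : Integrable (fun x => dist x x₀) ν)
    (hg : LipschitzWith 1 g) :
    ∫ x, g x ∂μ - ∫ x, g x ∂ν ≤ ∫ p, dist p.1 p.2 ∂π := by
  have hgμ := integrable_of_lipschitzWith hμ hg
  have hgν := integrable_of_lipschitzWith hν hg
  rw [← hπ.integral_comp_fst_sub_comp_snd hgμ hgν]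
  exact integral_mono ((hπ.integrable_comp_fst hgμ).sub (hπ.integrable_comp_snd hgν))
    (hπ.integrable_dist hμ hν) fun p => sub_le_dist_of_lipschitzWith_one hg p.1 p.2

theorem IsCoupling.exists_lipschitzWith_integral_eq (hπ : IsCoupling π μ ν)
    (hμ : Integrable (fun x => dist x x₀) μ) (hν : Integrable (fun x => dist x x₀) ν)
    (h_sup : ∀ r < ∫ p, dist p.1 p.2 ∂π, ∃ g : X → ℝ, LipschitzWith 1 g ∧
      r < ∫ x, g x ∂μ - ∫ x, g x ∂ν) :
    ∃ f : X → ℝ, LipschitzWith 1 f ∧ ∫ p, dist p.1 p.2 ∂π = ∫ x, f x ∂μ - ∫ x, f x ∂ν := by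
  have hX : Nonempty X := ⟨x₀⟩
  obtain ⟨r, -, hr_lt, hr_lim⟩ := exists_seq_strictMono_tendsto (∫ p, dist p.1 p.2 ∂π)
  choose g hg hrg using fun k => h_sup (r k) (hr_lt k)
  have hg_intμ (k : ℕ) := integrable_of_lipschitzWith hμ (hg k)
  have hg_intν (k : ℕ) := integrable_of_lipschitzWith hν (hg k)
  have hg_sub (k : ℕ) : Integrable (fun p : X × X => g k p.1 - g k p.2) π :=
    (hπ.integrable_comp_fst (hg_intμ k)).sub (hπ.integrable_comp_snd (hg_intν k))
  have h_slack : Tendsto (fun k => ∫ p, (dist p.1 p.2 - (g k p.1 - g k p.2)) ∂π) atTop (𝓝 0) := by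
    have hg_lim : Tendsto (fun k => ∫ x, g k x ∂μ - ∫ x, g k x ∂ν) atTop
        (𝓝 (∫ p, dist p.1 p.2 ∂π)) :=
      tendsto_of_tendsto_of_tendsto_of_le_of_le hr_lim tendsto_const_nhds
        (fun k => (hrg k).le) (fun k => hπ.integral_sub_integral_le hμ hν (hg k))
    have h_eq (k : ℕ) : ∫ p, (dist p.1 p.2 - (g k p.1 - g k p.2)) ∂π =
        ∫ p, dist p.1 p.2 ∂π - (∫ x, g k x ∂μ - ∫ x, g k x ∂ν) := by
      rw [integral_sub (hπ.integrable_dist hμ hν) (hg_sub k),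
        hπ.integral_comp_fst_sub_comp_snd (hg_intμ k) (hg_intν k)]
    simpa only [h_eq, sub_self] using (tendsto_const_nhds (x := ∫ p, dist p.1 p.2 ∂π)).sub hg_lim
  obtain ⟨f, hf, hf_eq⟩ := exists_lipschitzWith_ae_dist_eq_sub hg
    (fun k => (hπ.integrable_dist hμ hν).sub (hg_sub k)) h_slack
  refine ⟨f, hf, (integral_congr_ae hf_eq).trans ?_⟩
  exact hπ.integral_comp_fst_sub_comp_snd (integrable_of_lipschitzWith hμ hf)
    (integrable_of_lipschitzWith hν hf)

end LipschitzFunctions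

section Duality

variable {X : Type*} [MetricSpace X] [SecondCountableTopology X] [MeasurableSpace X] [BorelSpace X]
  [StandardBorelSpace X]

theorem measurableEmbedding_truncatedDist [Nonempty X] :
    MeasurableEmbedding (truncatedDist (X := X)) :=
  continuous_truncatedDist.measurable.measurableEmbedding injective_truncatedDist

variable {μ ν : Measure X} [IsProbabilityMeasure μ] [IsProbabilityMeasure ν]

theorem IsCouplingFunctional.exists_isCoupling_lintegral_edist_le
    {Λ : marginallyDominated μ ν →ₗ[ℝ] ℝ} (hΛ : IsCouplingFunctional Λ)
    (hd : (fun p : X × X => dist p.1 p.2) ∈ marginallyDominated μ ν) :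
    ∃ π, IsCoupling π μ ν ∧ ∫⁻ p, edist p.1 p.2 ∂π ≤ ENNReal.ofReal (Λ ⟨_, hd⟩) := by
  have hX : Nonempty X := nonempty_of_isProbabilityMeasure μ
  obtain ⟨π, hπ, hπ_int⟩ := exists_isCoupling_integral_eq_restrictContinuousMap hΛ
    measurableEmbedding_truncatedDist measurableEmbedding_truncatedDist
  have := hπ.isProbabilityMeasure
  refine ⟨π, hπ, ?_⟩
  have h_meas_pair : Measurable fun p : X × X => (truncatedDist p.1, truncatedDist p.2) :=
    (continuous_truncatedDist.prodMap continuous_truncatedDist).measurable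
  have h_meas (s : Finset (ℕ × ℕ)) :
      Measurable fun p : X × X => coordinateDist s (truncatedDist p.1, truncatedDist p.2) :=
    (coordinateDist s).continuous.measurable.comp h_meas_pair
  have h_dir : Directed (· ≤ ·) fun s (p : X × X) =>
      ENNReal.ofReal (coordinateDist s (truncatedDist p.1, truncatedDist p.2)) := by
    refine Monotone.directed_le fun s t hst p => ?_
    simp only [ofReal_coordinateDist]
    exact Finset.sup_mono hst
  simp only [← iSup_ofReal_coordinateDist_truncatedDist]
  rw [lintegral_iSup_directed (fun s => (h_meas s).ennreal_ofReal.aemeasurable) h_dir]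
  refine iSup_le fun s => ?_
  rw [← ofReal_integral_eq_lintegral_ofReal ?_ (ae_of_all _ fun p => coordinateDist_nonneg s _),
    hπ_int]
  · refine ENNReal.ofReal_le_ofReal (sub_nonneg.1 ?_)
    rw [← map_sub]
    exact hΛ.map_nonneg fun p => sub_nonneg.2 (coordinateDist_truncatedDist_le_dist s p.1 p.2)
  · exact .of_bound (h_meas s).aestronglyMeasurable ‖coordinateDist s‖
      (ae_of_all _ fun p => (coordinateDist s).norm_coe_le_norm _)

theorem exists_isCoupling_forall_lt_exists_lipschitzWith {x₀ : X}
    (hμ : Integrable (fun x => dist x x₀) μ) (hν : Integrable (fun x => dist x x₀) ν) :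
    ∃ π, IsCoupling π μ ν ∧ ∀ r < ∫ p, dist p.1 p.2 ∂π, ∃ g : X → ℝ, LipschitzWith 1 g ∧
      r < ∫ x, g x ∂μ - ∫ x, g x ∂ν := by
  let d : marginallyDominated μ ν := ⟨_, dist_mem_marginallyDominated hμ hν⟩
  obtain ⟨Λ, hΛ, hΛ_glb⟩ := exists_isCouplingFunctional_isGLB (-d)
  obtain ⟨π, hπ, hπ_le⟩ := hΛ.exists_isCoupling_lintegral_edist_le d.2
  have h_cost : ∫ p, dist p.1 p.2 ∂π ≤ Λ d := by
    rw [integral_eq_lintegral_of_nonneg_ae (ae_of_all _ fun p => dist_nonneg)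
      (hπ.integrable_dist hμ hν).1]
    refine ENNReal.toReal_le_of_le_ofReal (hΛ.map_nonneg fun p => dist_nonneg) ?_
    simpa only [edist_dist] using hπ_le
  refine ⟨π, hπ, fun r hr => ?_⟩
  have h_lt : Λ (-d) < -r := by
    rw [map_neg]
    exact neg_lt_neg (hr.trans_le h_cost)
  obtain ⟨_, ⟨φ, ψ, hφ, hψ, hle, rfl⟩, h_val⟩ := (isGLB_lt_iff hΛ_glb).1 h_lt
  have h_sep (x y : X) : -φ x ≤ ψ y + dist x y := by
    have h_neg : -dist x y ≤ φ x + ψ y := hle x y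
    linarith
  obtain ⟨g, hg, hφg, hgψ⟩ := exists_lipschitzWith_between h_sep
  have h_fst : -∫ x, φ x ∂μ ≤ ∫ x, g x ∂μ := by
    rw [← integral_neg]
    exact integral_mono hφ.neg (integrable_of_lipschitzWith hμ hg) hφg
  have h_snd : ∫ x, g x ∂ν ≤ ∫ x, ψ x ∂ν :=
    integral_mono (integrable_of_lipschitzWith hν hg) hψ hgψ
  exact ⟨g, hg, by linarith⟩

theorem kantorovich_duality_general {x₀ : X}
    (hμ : Integrable (fun x => dist x x₀) μ) (hν : Integrable (fun x => dist x x₀) ν) :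
    ∃ (π : Measure (X × X)) (f : X → ℝ), IsCoupling π μ ν ∧ LipschitzWith 1 f ∧
      (∀ π', IsCoupling π' μ ν → ∫ p, dist p.1 p.2 ∂π ≤ ∫ p, dist p.1 p.2 ∂π') ∧
      (∀ g : X → ℝ, LipschitzWith 1 g →
        ∫ x, g x ∂μ - ∫ x, g x ∂ν ≤ ∫ x, f x ∂μ - ∫ x, f x ∂ν) ∧
      ∫ p, dist p.1 p.2 ∂π = ∫ x, f x ∂μ - ∫ x, f x ∂ν := by
  obtain ⟨π, hπ, h_sup⟩ := exists_isCoupling_forall_lt_exists_lipschitzWith hμ hν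
  obtain ⟨f, hf, h_eq⟩ := hπ.exists_lipschitzWith_integral_eq hμ hν h_sup
  refine ⟨π, f, hπ, hf, fun π' hπ' => ?_, fun g hg => ?_, h_eq⟩
  · exact h_eq.trans_le (hπ'.integral_sub_integral_le hμ hν hf)
  · exact (hπ.integral_sub_integral_le hμ hν hg).trans_eq h_eq

end Duality

/-- **Kantorovich duality, existence part.** For probability measures `μ, ν` on `ℝⁿ`
with finite first moments, there exist an optimal coupling `π` and an optimal
1-Lipschitz critic `f`, and the optimal primal and dual values coincide. -/
theorem kantorovich_duality (n : ℕ)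
    (μ ν : Measure (EuclideanSpace ℝ (Fin n)))
    [IsProbabilityMeasure μ] [IsProbabilityMeasure ν]
    (hμ : Integrable (fun x => ‖x‖) μ) (hν : Integrable (fun x => ‖x‖) ν) :
    ∃ (π : Measure (EuclideanSpace ℝ (Fin n) × EuclideanSpace ℝ (Fin n)))
      (f : EuclideanSpace ℝ (Fin n) → ℝ),
      IsProbabilityMeasure π ∧
      π.map Prod.fst = μ ∧ π.map Prod.snd = ν ∧
      LipschitzWith 1 f ∧
      (∀ π' : Measure (EuclideanSpace ℝ (Fin n) × EuclideanSpace ℝ (Fin n)),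
        IsProbabilityMeasure π' → π'.map Prod.fst = μ → π'.map Prod.snd = ν →
          ∫ p, ‖p.1 - p.2‖ ∂π ≤ ∫ p, ‖p.1 - p.2‖ ∂π') ∧
      (∀ g : EuclideanSpace ℝ (Fin n) → ℝ, LipschitzWith 1 g →
          ∫ x, g x ∂μ - ∫ x, g x ∂ν ≤ ∫ x, f x ∂μ - ∫ x, f x ∂ν) ∧
      ∫ p, ‖p.1 - p.2‖ ∂π = ∫ x, f x ∂μ - ∫ x, f x ∂ν := by
  simp only [← dist_eq_norm]
  obtain ⟨π, f, hπ, hf, h_min, h_max, h_eq⟩ := kantorovich_duality_general (μ := μ) (ν := ν)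
    (x₀ := 0)
    (by simpa only [dist_zero_right] using hμ) (by simpa only [dist_zero_right] using hν)
  exact ⟨π, f, hπ.isProbabilityMeasure, hπ.map_fst, hπ.map_snd, hf,
    fun π' _ h_fst h_snd => h_min π' ⟨h_fst, h_snd⟩, h_max, h_eq⟩
end

section
/- Let μ = N(0,1) be the standard normal distribution on ℝ and let ν = ½N(−1,1) + ½N(1,1) be the equal-weight mixture of the normal distributions centered at −1 and 1 with unit variance. Then the function φ*(x) = −|x| maximizes ∫ φ dμ − ∫ φ dν over all 1-Lipschitz functions φ : ℝ → ℝ; that is, for every 1-Lipschitz φ : ℝ → ℝ, ∫ φ dμ − ∫ φ dν ≤ ∫ (−|x|) dμ(x) − ∫ (−|x|) dν(x). -/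
open MeasureTheory ProbabilityTheory
open scoped ENNReal

/-!
Write `g x = φ x + |x|`; the claim is `∫ g dμ ≤ ∫ g dν`. Both measures are symmetric, so only
`h x = g x + g (-x)` matters: twice the two integrals are the integrals of `h` against `N(0,1)` and
`N(1,1)`. Since `φ` is 1-Lipschitz, `h` is a nondecreasing function of `|x|`, whereas the density
`p` of `N(0,1)` is a nonincreasing one. Translating `p` by `m` then increases `∫ p h`: pairing `x`
with its reflection `m - x` writes twice the gain as
`∫ (p (x - m) - p x) * (h x - h (m - x)) dx`, whose two factors always have the same sign.
-/

open scoped NNReal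

section Rearrangement

variable {E : Type*} [NormedAddCommGroup E] {p h : E → ℝ}

lemma sub_mul_sub_reflect_nonneg (hp : ∀ x y, ‖x‖ ≤ ‖y‖ → p y ≤ p x)
    (hh : ∀ x y, ‖x‖ ≤ ‖y‖ → h x ≤ h y) (m x : E) :
    0 ≤ (p (x - m) - p x) * (h x - h (m - x)) := by
  rcases le_total ‖x - m‖ ‖x‖ with hx | hx
  · have hx' : ‖m - x‖ ≤ ‖x‖ := by rwa [norm_sub_rev]
    exact mul_nonneg (sub_nonneg.2 (hp _ _ hx)) (sub_nonneg.2 (hh _ _ hx'))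
  · have hx' : ‖x‖ ≤ ‖m - x‖ := by rwa [norm_sub_rev]
    exact mul_nonneg_of_nonpos_of_nonpos (sub_nonpos.2 (hp _ _ hx)) (sub_nonpos.2 (hh _ _ hx'))

lemma integral_mul_le_integral_translate_mul [MeasurableSpace E] [MeasurableAdd E] [MeasurableNeg E]
    {ρ : Measure E} [ρ.IsAddLeftInvariant] [ρ.IsNegInvariant]
    (hp : ∀ x y, ‖x‖ ≤ ‖y‖ → p y ≤ p x) (hh : ∀ x y, ‖x‖ ≤ ‖y‖ → h x ≤ h y) (m : E)
    (hph : Integrable (fun x ↦ p x * h x) ρ) (hpmh : Integrable (fun x ↦ p (x - m) * h x) ρ) :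
    ∫ x, p x * h x ∂ρ ≤ ∫ x, p (x - m) * h x ∂ρ := by
  have p_congr {x y : E} (hxy : ‖x‖ = ‖y‖) : p x = p y := (hp _ _ hxy.ge).antisymm (hp _ _ hxy.le)
  have reflect_centred : (fun x ↦ p (m - x) * h (m - x)) = fun x ↦ p (x - m) * h (m - x) :=
    funext fun x ↦ by rw [p_congr (norm_sub_rev m x)]
  have reflect_translate : (fun x ↦ p (m - x - m) * h (m - x)) = fun x ↦ p x * h (m - x) :=
    funext fun x ↦ by rw [sub_sub_cancel_left, p_congr (norm_neg x)]
  have hpmh' : Integrable (fun x ↦ p (x - m) * h (m - x)) ρ :=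
    reflect_centred ▸ hph.comp_sub_left m
  have hph' : Integrable (fun x ↦ p x * h (m - x)) ρ := reflect_translate ▸ hpmh.comp_sub_left m
  have integral_reflect_centred : ∫ x, p (x - m) * h (m - x) ∂ρ = ∫ x, p x * h x ∂ρ := by
    rw [← reflect_centred, integral_sub_left_eq_self (fun x ↦ p x * h x) ρ m]
  have integral_reflect_translate : ∫ x, p x * h (m - x) ∂ρ = ∫ x, p (x - m) * h x ∂ρ := by
    rw [← reflect_translate, integral_sub_left_eq_self (fun x ↦ p (x - m) * h x) ρ m]
  have twice_gain : ∫ x, (p (x - m) - p x) * (h x - h (m - x)) ∂ρ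
      = 2 * (∫ x, p (x - m) * h x ∂ρ - ∫ x, p x * h x ∂ρ) := by
    calc ∫ x, (p (x - m) - p x) * (h x - h (m - x)) ∂ρ
        = ∫ x, (p (x - m) * h x - p x * h x) - (p (x - m) * h (m - x) - p x * h (m - x)) ∂ρ := by
          congr with x
          ring
      _ = 2 * (∫ x, p (x - m) * h x ∂ρ - ∫ x, p x * h x ∂ρ) := by
          rw [integral_sub (hpmh.sub' hph) (hpmh'.sub' hph'), integral_sub hpmh hph,
            integral_sub hpmh' hph', integral_reflect_centred, integral_reflect_translate]
          ring
  have gain_nonneg : 0 ≤ ∫ x, (p (x - m) - p x) * (h x - h (m - x)) ∂ρ :=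
    integral_nonneg (sub_mul_sub_reflect_nonneg hp hh m)
  linarith

end Rearrangement

section Lipschitz

lemma integrable_of_lipschitzWith_s5 {E F : Type*} [NormedAddCommGroup E] [NormedAddCommGroup F]
    [MeasurableSpace E] {ρ : Measure E} [IsFiniteMeasure ρ] {K : ℝ≥0} {f : E → F}
    (hf : LipschitzWith K f) (hρ : Integrable id ρ) : Integrable f ρ := by
  have hf₀ : LipschitzWith K (fun x ↦ f x - f 0) := by
    simpa using hf.sub (LipschitzWith.const (f 0))
  have hint : Integrable (fun x ↦ f x - f 0) ρ :=
    memLp_one_iff_integrable.1 (hf₀.comp_memLp (sub_self _) (memLp_one_iff_integrable.2 hρ))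
  simpa using hint.fun_add (integrable_const (f 0))

lemma add_neg_add_abs_le_of_lipschitzWith {K : ℝ≥0} {φ : ℝ → ℝ} (hφ : LipschitzWith K φ)
    {x y : ℝ} (hxy : |x| ≤ |y|) :
    (φ x + K * |x|) + (φ (-x) + K * |-x|) ≤ (φ y + K * |y|) + (φ (-y) + K * |-y|) := by
  have even_abs (z : ℝ) : φ z + φ (-z) = φ |z| + φ (-|z|) := by
    rcases abs_choice z with hz | hz <;> rw [hz]
    rw [neg_neg, add_comm]
  have hpos : φ |x| ≤ φ |y| + K * (|y| - |x|) := by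
    simpa [Real.dist_eq, abs_sub_comm |x|, abs_of_nonneg (sub_nonneg.2 hxy)]
      using hφ.le_add_mul |x| |y|
  have hneg : φ (-|x|) ≤ φ (-|y|) + K * (|y| - |x|) := by
    simpa [Real.dist_eq, neg_add_eq_sub, abs_sub_comm |x|, abs_of_nonneg (sub_nonneg.2 hxy)]
      using hφ.le_add_mul (-|x|) (-|y|)
  rw [abs_neg, abs_neg]
  linarith [even_abs x, even_abs y]

end Lipschitz

section Gaussian

variable {m : ℝ} {v : ℝ≥0}

lemma gaussianPDFReal_le_of_abs_sub_le {x y : ℝ} (hxy : |x - m| ≤ |y - m|) :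
    gaussianPDFReal m v y ≤ gaussianPDFReal m v x := by
  have hsq : (x - m) ^ 2 ≤ (y - m) ^ 2 := sq_le_sq.2 hxy
  simp only [gaussianPDFReal]
  gcongr

lemma integrable_gaussianReal_iff {F : Type*} [NormedAddCommGroup F] [NormedSpace ℝ F]
    {f : ℝ → F} (hv : v ≠ 0) :
    Integrable f (gaussianReal m v) ↔ Integrable (fun x ↦ gaussianPDFReal m v x • f x) := by
  rw [gaussianReal_of_var_ne_zero m hv, integrable_withDensity_iff_integrable_smul'
    (measurable_gaussianPDF m v) (ae_of_all _ fun _ ↦ gaussianPDF_lt_top)]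
  simp only [toReal_gaussianPDF]

lemma integral_gaussianReal_zero_le {h : ℝ → ℝ} (hh : ∀ x y, |x| ≤ |y| → h x ≤ h y)
    (h₀ : Integrable h (gaussianReal 0 v)) (hₘ : Integrable h (gaussianReal m v)) :
    ∫ x, h x ∂gaussianReal 0 v ≤ ∫ x, h x ∂gaussianReal m v := by
  rcases eq_or_ne v 0 with rfl | hv
  · simpa only [gaussianReal_zero_var, integral_dirac] using hh 0 m (by simp)
  have translate (x : ℝ) : gaussianPDFReal m v x = gaussianPDFReal 0 v (x - m) := by
    rw [gaussianPDFReal_sub, zero_add]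
  rw [integrable_gaussianReal_iff hv] at h₀ hₘ
  simp only [integral_gaussianReal_eq_integral_smul hv, translate, smul_eq_mul] at h₀ hₘ ⊢
  exact integral_mul_le_integral_translate_mul
    (fun x y hxy ↦ gaussianPDFReal_le_of_abs_sub_le (by simpa using hxy)) hh m h₀ hₘ

lemma integral_comp_neg_gaussianReal {F : Type*} [NormedAddCommGroup F] [NormedSpace ℝ F]
    (f : ℝ → F) : ∫ x, f (-x) ∂gaussianReal m v = ∫ x, f x ∂gaussianReal (-m) v := by
  rw [← gaussianReal_map_neg]
  exact ((MeasurableEquiv.neg ℝ).measurableEmbedding.integral_map f).symm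

lemma integrable_comp_neg_gaussianReal {F : Type*} [NormedAddCommGroup F] {f : ℝ → F}
    (hf : Integrable f (gaussianReal (-m) v)) :
    Integrable (fun x ↦ f (-x)) (gaussianReal m v) := by
  rw [← gaussianReal_map_neg] at hf
  exact hf.comp_measurable measurable_neg

end Gaussian

/-- The equal-weight mixture `½N(-m,v) + ½N(m,v)` of two Gaussians of variance `v` with opposite
means, the second measure that the critic has to separate from `N(0,v)`. -/
noncomputable def symmGaussianMixture (m : ℝ) (v : ℝ≥0) : Measure ℝ :=
  (1 / 2 : ℝ≥0∞) • gaussianReal (-m) v + (1 / 2 : ℝ≥0∞) • gaussianReal m v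

section Mixture

variable {m : ℝ} {v : ℝ≥0} {f : ℝ → ℝ}

lemma integrable_symmGaussianMixture {F : Type*} [NormedAddCommGroup F] {f : ℝ → F}
    (hneg : Integrable f (gaussianReal (-m) v)) (hpos : Integrable f (gaussianReal m v)) :
    Integrable f (symmGaussianMixture m v) :=
  (hneg.smul_measure (by simp)).add_measure (hpos.smul_measure (by simp))

lemma two_mul_integral_symmGaussianMixture (hneg : Integrable f (gaussianReal (-m) v))
    (hpos : Integrable f (gaussianReal m v)) :
    2 * ∫ x, f x ∂symmGaussianMixture m v = ∫ x, f x + f (-x) ∂gaussianReal m v := by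
  rw [symmGaussianMixture,
    integral_add_measure (hneg.smul_measure (by simp)) (hpos.smul_measure (by simp)),
    integral_smul_measure, integral_smul_measure,
    integral_add hpos (integrable_comp_neg_gaussianReal hneg), integral_comp_neg_gaussianReal]
  simp only [one_div, ENNReal.toReal_inv, ENNReal.toReal_ofNat, smul_eq_mul]
  ring

lemma symmGaussianMixture_zero_mean (v : ℝ≥0) : symmGaussianMixture 0 v = gaussianReal 0 v := by
  rw [symmGaussianMixture, neg_zero, ← add_smul, ENNReal.add_halves, one_smul]

lemma integral_gaussianReal_zero_le_symmGaussianMixture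
    (hf : ∀ x y, |x| ≤ |y| → f x + f (-x) ≤ f y + f (-y))
    (hint : ∀ a, Integrable f (gaussianReal a v)) :
    ∫ x, f x ∂gaussianReal 0 v ≤ ∫ x, f x ∂symmGaussianMixture m v := by
  have symm_integrable (a : ℝ) : Integrable (fun x ↦ f x + f (-x)) (gaussianReal a v) :=
    (hint a).add (integrable_comp_neg_gaussianReal (hint (-a)))
  have symm_le := integral_gaussianReal_zero_le hf (symm_integrable 0) (symm_integrable m)
  rw [← two_mul_integral_symmGaussianMixture (hint _) (hint _),
    ← two_mul_integral_symmGaussianMixture (hint _) (hint _),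
    symmGaussianMixture_zero_mean] at symm_le
  linarith

end Mixture

theorem neg_abs_is_optimal_critic_for_gaussian_mixture_general (m : ℝ) (v : ℝ≥0) {K : ℝ≥0}
    {φ : ℝ → ℝ} (hφ : LipschitzWith K φ) :
    ∫ x, φ x ∂gaussianReal 0 v - ∫ x, φ x ∂symmGaussianMixture m v
      ≤ ∫ x, -(K * |x|) ∂gaussianReal 0 v - ∫ x, -(K * |x|) ∂symmGaussianMixture m v := by
  have id_integrable (a : ℝ) : Integrable id (gaussianReal a v) :=
    memLp_one_iff_integrable.1 (memLp_id_gaussianReal 1)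
  have φ_integrable (a : ℝ) : Integrable φ (gaussianReal a v) :=
    integrable_of_lipschitzWith_s5 hφ (id_integrable a)
  have abs_integrable (a : ℝ) : Integrable (fun x ↦ (K : ℝ) * |x|) (gaussianReal a v) :=
    (id_integrable a).abs.const_mul _
  have sum_le : ∫ x, φ x + K * |x| ∂gaussianReal 0 v
      ≤ ∫ x, φ x + K * |x| ∂symmGaussianMixture m v :=
    integral_gaussianReal_zero_le_symmGaussianMixture
      (fun _ _ ↦ add_neg_add_abs_le_of_lipschitzWith hφ)
      fun a ↦ (φ_integrable a).add (abs_integrable a)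
  rw [integral_add (φ_integrable 0) (abs_integrable 0),
    integral_add (integrable_symmGaussianMixture (φ_integrable _) (φ_integrable _))
      (integrable_symmGaussianMixture (abs_integrable _) (abs_integrable _))] at sum_le
  rw [integral_neg, integral_neg]
  linarith

/-- **A non-differentiable optimal critic for Gaussian mixtures.** For `μ = N(0,1)` and
`ν = ½N(−1,1) + ½N(1,1)`, the function `φ*(x) = −|x|` maximizes
`∫ φ dμ − ∫ φ dν` over all 1-Lipschitz functions `φ : ℝ → ℝ`. -/
theorem neg_abs_is_optimal_critic_for_gaussian_mixture
    (μ ν : Measure ℝ)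
    (hμ : μ = gaussianReal 0 1)
    (hν : ν = (1 / 2 : ℝ≥0∞) • gaussianReal (-1) 1 + (1 / 2 : ℝ≥0∞) • gaussianReal 1 1) :
    ∀ φ : ℝ → ℝ, LipschitzWith 1 φ →
      ∫ x, φ x ∂μ - ∫ x, φ x ∂ν ≤ ∫ x, -|x| ∂μ - ∫ x, -|x| ∂ν := by
  intro φ hφ
  simpa only [hμ, hν, symmGaussianMixture, NNReal.coe_one, one_mul] using
    neg_abs_is_optimal_critic_for_gaussian_mixture_general 1 1 hφ
end

section
/- Let f, g : ℝ → ℝ be continuous functions such that: (1) f and g are even (f(−x) = f(x) and g(−x) = g(x) for all x); (2) f ≥ 0 and g ≥ 0; (3) the open supports {x : f(x) > 0} and {x : g(x) > 0} are disjoint; (4) the open support {x : f(x) > 0} is connected; (5) f and g are integrable with ∫ f(x) dx = ∫ g(x) dx > 0; and (6) x ↦ |x|·f(x) and x ↦ |x|·g(x) are integrable. Then the function φ*(x) = −|x| maximizes ∫ φ(x)(f(x) − g(x)) dx over all 1-Lipschitz functions φ : ℝ → ℝ for which φ·(f − g) is integrable; that is, for every such φ, ∫ φ(x)(f(x) − g(x))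 dx ≤ ∫ (−|x|)(f(x) − g(x)) dx. -/
open MeasureTheory

/-!
Since `f - g` is even, replacing `φ` by its even part leaves `∫ φ (f - g)` unchanged and keeps `φ`
`1`-Lipschitz. For even `1`-Lipschitz `φ` the function `φ x + |x|` is nondecreasing in `|x|`.
Symmetry and connectedness make the support of `f` an interval centred at `0`, so some radius `r`
separates it from the support of `g`. Hence `φ x + |x| - (φ r + |r|)` and `f x - g x` have opposite
signs, and the constant `φ r + |r|` integrates to zero against `f - g`.
-/

section Separation

lemma abs_le_abs_of_mem_of_notMem {α : Type*} [AddCommGroup α] [LinearOrder α]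
    [IsOrderedAddMonoid α] {s : Set α} (hs : s.OrdConnected) (hneg : ∀ x ∈ s, -x ∈ s)
    {x y : α} (hx : x ∈ s) (hy : y ∉ s) : |x| ≤ |y| := by
  have habs : |x| ∈ s := abs_by_cases (· ∈ s) hx (hneg x hx)
  contrapose! hy
  exact hs.out (hneg _ habs) habs (abs_le.1 hy.le)

lemma exists_separating_radius {s t : Set ℝ} (hs : s.OrdConnected) (hneg : ∀ x ∈ s, -x ∈ s)
    (hst : Disjoint s t) (hs_nonempty : s.Nonempty) (ht_nonempty : t.Nonempty) :
    ∃ r, 0 ≤ r ∧ (∀ x ∈ s, |x| ≤ r) ∧ ∀ y ∈ t, r ≤ |y| := by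
  have hle : ∀ a ∈ abs '' s, ∀ b ∈ abs '' t, a ≤ b := by
    rintro _ ⟨x, hx, rfl⟩ _ ⟨y, hy, rfl⟩
    exact abs_le_abs_of_mem_of_notMem hs hneg hx (hst.notMem_of_mem_right hy)
  obtain ⟨r, hsr, hrt⟩ :=
    exists_between_of_forall_le (hs_nonempty.image abs) (ht_nonempty.image abs) hle
  obtain ⟨x, hx⟩ := hs_nonempty
  exact ⟨r, (abs_nonneg x).trans (hsr ⟨x, hx, rfl⟩), fun x hx => hsr ⟨x, hx, rfl⟩,
    fun y hy => hrt ⟨y, hy, rfl⟩⟩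

end Separation

section EvenPart

/-- The even part `x ↦ (φ x + φ (-x)) / 2` of a real-valued function; it symmetrizes a competitor
`φ` without changing its integral against an even density. -/
noncomputable def evenPart {α : Type*} [Neg α] (φ : α → ℝ) (x : α) : ℝ :=
  (φ x + φ (-x)) / 2

lemma even_evenPart {α : Type*} [InvolutiveNeg α] (φ : α → ℝ) : (evenPart φ).Even := fun x => by
  simp only [evenPart, neg_neg, add_comm]

lemma lipschitzWith_evenPart {E : Type*} [SeminormedAddCommGroup E] {K : NNReal} {φ : E → ℝ}
    (hφ : LipschitzWith K φ) : LipschitzWith K (evenPart φ) := by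
  refine LipschitzWith.of_le_add_mul K fun x y => ?_
  have hpos := hφ.le_add_mul x y
  have hneg := hφ.le_add_mul (-x) (-y)
  rw [dist_neg_neg] at hneg
  simp only [evenPart]
  linarith

lemma integral_evenPart_mul {α : Type*} [AddGroup α] [MeasurableSpace α] [MeasurableNeg α]
    {μ : Measure α} [μ.IsNegInvariant] {φ h : α → ℝ} (hh : h.Even)
    (hφh : Integrable (fun x => φ x * h x) μ) :
    ∫ x, evenPart φ x * h x ∂μ = ∫ x, φ x * h x ∂μ := by
  have hreflect : (fun x => φ (-x) * h x) = fun x => φ (-x) * h (-x) :=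
    funext fun x => by rw [hh x]
  have hφh_neg : Integrable (fun x => φ (-x) * h x) μ := hreflect ▸ hφh.comp_neg
  calc ∫ x, evenPart φ x * h x ∂μ
      = ∫ x, (φ x * h x + φ (-x) * h x) / 2 ∂μ := by simp only [evenPart]; congr! 2; ring
    _ = (∫ x, φ x * h x ∂μ + ∫ x, φ (-x) * h x ∂μ) / 2 := by
      rw [integral_div, integral_add hφh hφh_neg]
    _ = ∫ x, φ x * h x ∂μ := by
      rw [hreflect, integral_neg_eq_self (fun x => φ x * h x) μ, add_self_div_two]

end EvenPart

section Lipschitz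

lemma integrable_lipschitz_mul {E : Type*} [SeminormedAddCommGroup E] [MeasurableSpace E]
    [OpensMeasurableSpace E] {μ : Measure E} {K : NNReal} {φ h : E → ℝ} (hφ : LipschitzWith K φ)
    (hh : Integrable h μ) (hmoment : Integrable (fun x => ‖x‖ * h x) μ) :
    Integrable (fun x => φ x * h x) μ := by
  have hgrowth (x : E) : ‖φ x‖ ≤ ‖φ 0‖ + K * ‖x‖ := by
    have hdist := hφ.dist_le_mul x 0
    rw [dist_eq_norm, dist_zero_right] at hdist
    linarith [norm_le_norm_add_norm_sub' (φ x) (φ 0)]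
  refine ((hh.norm.const_mul ‖φ 0‖).add (hmoment.norm.const_mul K)).mono'
    (hφ.continuous.aestronglyMeasurable.mul hh.aestronglyMeasurable) (.of_forall fun x => ?_)
  calc ‖φ x * h x‖ ≤ (‖φ 0‖ + K * ‖x‖) * ‖h x‖ := by
        rw [norm_mul]
        gcongr
        exact hgrowth x
    _ = ‖φ 0‖ * ‖h x‖ + K * ‖‖x‖ * h x‖ := by rw [norm_mul, norm_norm]; ring

lemma add_abs_le_add_abs_of_even {φ : ℝ → ℝ} (hφ : LipschitzWith 1 φ) (hφ_even : φ.Even)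
    {x y : ℝ} (hxy : |x| ≤ |y|) : φ x + |x| ≤ φ y + |y| := by
  have hφ_abs (z : ℝ) : φ |z| = φ z := abs_by_cases (fun w => φ w = φ z) rfl (hφ_even z)
  have hlip := hφ.le_add_mul |x| |y|
  rw [hφ_abs, hφ_abs, NNReal.coe_one, one_mul, Real.dist_eq, abs_sub_comm,
    abs_of_nonneg (sub_nonneg.2 hxy)] at hlip
  linarith

end Lipschitz

section SingleCrossing

lemma integral_mul_nonpos_of_sub_mul_nonpos {α : Type*} [MeasurableSpace α] {μ : Measure α}
    {u h : α → ℝ} {c : ℝ} (hh : Integrable h μ) (hh_zero : ∫ x, h x ∂μ = 0)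
    (huh : Integrable (fun x => u x * h x) μ) (hsign : ∀ x, (u x - c) * h x ≤ 0) :
    ∫ x, u x * h x ∂μ ≤ 0 :=
  calc ∫ x, u x * h x ∂μ = ∫ x, (u x - c) * h x ∂μ := by
        simp only [sub_mul]
        rw [integral_sub huh (hh.const_mul c), integral_const_mul, hh_zero, mul_zero, sub_zero]
    _ ≤ 0 := integral_nonpos hsign

variable {μ : Measure ℝ} {φ h : ℝ → ℝ} {r : ℝ}

lemma integral_even_mul_le_integral_neg_abs_mul (hφ : LipschitzWith 1 φ) (hφ_even : φ.Even)
    (hh : Integrable h μ) (hmoment : Integrable (fun x => |x| * h x) μ)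
    (hh_zero : ∫ x, h x ∂μ = 0) (hr : 0 ≤ r) (hinside : ∀ x, |x| < r → 0 ≤ h x)
    (houtside : ∀ x, r < |x| → h x ≤ 0) :
    ∫ x, φ x * h x ∂μ ≤ ∫ x, -|x| * h x ∂μ := by
  have hφh : Integrable (fun x => φ x * h x) μ := integrable_lipschitz_mul hφ hh hmoment
  have hsign (x : ℝ) : (φ x + |x| - (φ r + |r|)) * h x ≤ 0 := by
    rcases lt_trichotomy |x| |r| with hlt | heq | hgt
    · exact mul_nonpos_of_nonpos_of_nonneg
        (sub_nonpos.2 (add_abs_le_add_abs_of_even hφ hφ_even hlt.le))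
        (hinside x (by rwa [abs_of_nonneg hr] at hlt))
    · have hconst : φ x + |x| = φ r + |r| :=
        (add_abs_le_add_abs_of_even hφ hφ_even heq.le).antisymm
          (add_abs_le_add_abs_of_even hφ hφ_even heq.ge)
      rw [hconst, sub_self, zero_mul]
    · exact mul_nonpos_of_nonneg_of_nonpos
        (sub_nonneg.2 (add_abs_le_add_abs_of_even hφ hφ_even hgt.le))
        (houtside x (by rwa [abs_of_nonneg hr] at hgt))
  have hsum : ∫ x, (φ x + |x|) * h x ∂μ ≤ 0 :=
    integral_mul_nonpos_of_sub_mul_nonpos hh hh_zero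
      (by simpa only [add_mul] using! hφh.add hmoment) hsign
  simp only [add_mul] at hsum
  rw [integral_add hφh hmoment] at hsum
  simp only [neg_mul, integral_neg]
  linarith

lemma integral_mul_le_integral_neg_abs_mul [μ.IsNegInvariant] (hφ : LipschitzWith 1 φ)
    (hh_even : h.Even) (hh : Integrable h μ) (hmoment : Integrable (fun x => |x| * h x) μ)
    (hh_zero : ∫ x, h x ∂μ = 0) (hr : 0 ≤ r) (hinside : ∀ x, |x| < r → 0 ≤ h x)
    (houtside : ∀ x, r < |x| → h x ≤ 0) :
    ∫ x, φ x * h x ∂μ ≤ ∫ x, -|x| * h x ∂μ :=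
  calc ∫ x, φ x * h x ∂μ = ∫ x, evenPart φ x * h x ∂μ :=
        (integral_evenPart_mul hh_even (integrable_lipschitz_mul hφ hh hmoment)).symm
    _ ≤ ∫ x, -|x| * h x ∂μ :=
        integral_even_mul_le_integral_neg_abs_mul (lipschitzWith_evenPart hφ) (even_evenPart φ)
          hh hmoment hh_zero hr hinside houtside

end SingleCrossing

lemma exists_pos_of_integral_pos {α : Type*} [MeasurableSpace α] {μ : Measure α} {f : α → ℝ}
    (hf : 0 < ∫ x, f x ∂μ) : ∃ x, 0 < f x := by
  contrapose! hf
  exact integral_nonpos hf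

theorem neg_abs_optimal_for_symmetric_separated_densities_general {μ : Measure ℝ}
    [μ.IsNegInvariant] {f g φ : ℝ → ℝ} (hf_even : f.Even) (hg_even : g.Even)
    (hf_nonneg : ∀ x, 0 ≤ f x) (hg_nonneg : ∀ x, 0 ≤ g x)
    (hdisj : Disjoint {x | 0 < f x} {x | 0 < g x}) (hconn : IsPreconnected {x | 0 < f x})
    (hf : Integrable f μ) (hg : Integrable g μ)
    (heq : ∫ x, f x ∂μ = ∫ x, g x ∂μ) (hpos : 0 < ∫ x, f x ∂μ)
    (hf_moment : Integrable (fun x => |x| * f x) μ)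
    (hg_moment : Integrable (fun x => |x| * g x) μ) (hφ : LipschitzWith 1 φ) :
    ∫ x, φ x * (f x - g x) ∂μ ≤ ∫ x, -|x| * (f x - g x) ∂μ := by
  have hsymm : ∀ x ∈ {x | 0 < f x}, -x ∈ {x | 0 < f x} := fun x hx => hx.trans_eq (hf_even x).symm
  obtain ⟨r, hr, hf_le, hg_ge⟩ := exists_separating_radius hconn.ordConnected hsymm hdisj
    (exists_pos_of_integral_pos hpos) (exists_pos_of_integral_pos (heq ▸ hpos))
  have hinside (x : ℝ) (hx : |x| < r) : 0 ≤ f x - g x := by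
    have hgx : g x ≤ 0 := not_lt.1 fun hgx => (hg_ge x hgx).not_gt hx
    linarith [hf_nonneg x]
  have houtside (x : ℝ) (hx : r < |x|) : f x - g x ≤ 0 := by
    have hfx : f x ≤ 0 := not_lt.1 fun hfx => (hf_le x hfx).not_gt hx
    linarith [hg_nonneg x]
  have hmoment : Integrable (fun x => |x| * (f x - g x)) μ := by
    simpa only [mul_sub] using! hf_moment.sub hg_moment
  have hzero : ∫ x, (f x - g x) ∂μ = 0 := by rw [integral_sub hf hg, heq, sub_self]
  exact integral_mul_le_integral_neg_abs_mul hφ (fun x => by rw [hf_even x, hg_even x])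
    (hf.sub hg) hmoment hzero hr hinside houtside

/-- **Optimality of `−|x|` for symmetric densities with separated supports.**
If `f, g : ℝ → ℝ` are continuous, even, nonnegative, have disjoint open supports,
the open support of `f` is connected, both are integrable with equal positive total
mass, and `|x|·f(x)`, `|x|·g(x)` are integrable, then `φ*(x) = −|x|` maximizes
`∫ φ(x)(f(x) − g(x)) dx` over 1-Lipschitz `φ` with integrable `φ·(f − g)`. -/
theorem neg_abs_optimal_for_symmetric_separated_densities
    (f g : ℝ → ℝ) (hfc : Continuous f) (hgc : Continuous g)
    (hfeven : ∀ x, f (-x) = f x) (hgeven : ∀ x, g (-x) = g x)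
    (hfnonneg : ∀ x, 0 ≤ f x) (hgnonneg : ∀ x, 0 ≤ g x)
    (hdisj : Disjoint {x | 0 < f x} {x | 0 < g x})
    (hconn : IsConnected {x | 0 < f x})
    (hfint : Integrable f) (hgint : Integrable g)
    (heq : ∫ x, f x = ∫ x, g x) (hpos : 0 < ∫ x, f x)
    (hfmom : Integrable (fun x => |x| * f x))
    (hgmom : Integrable (fun x => |x| * g x)) :
    ∀ φ : ℝ → ℝ, LipschitzWith 1 φ →
      Integrable (fun x => φ x * (f x - g x)) →
      ∫ x, φ x * (f x - g x) ≤ ∫ x, (-|x|) * (f x - g x) :=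
  fun _ hφ _ => neg_abs_optimal_for_symmetric_separated_densities_general hfeven hgeven hfnonneg
    hgnonneg hdisj hconn.isPreconnected hfint hgint heq hpos hfmom hgmom hφ
end

section
/- Let f : ℝⁿ → ℝ be 1-Lipschitz and let x, y, y′ ∈ ℝⁿ satisfy y ≠ x, y′ ≠ x, f(x) − f(y) = ‖x − y‖, f(x) − f(y′) = ‖x − y′‖, and suppose there is no λ > 0 with y − x = λ·(y′ − x). Then f is not differentiable at x. -/
/-!
If `f` attains its Lipschitz bound `K` between `x` and `y`, then it does so between `x` and every
intermediate point, so the derivative of `f` at `x`, a functional of norm at most `K`, takes the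
value `K * ‖x - y‖` at `x - y`. In a strictly convex space the vectors at which a functional attains
a positive norm all lie on a single ray.
-/

open Filter Set Topology
open AffineMap (lineMap)
open scoped NNReal

theorem sub_eq_mul_dist_of_dist_add_dist_eq {X : Type*} [PseudoMetricSpace X] {K : ℝ≥0}
    {f : X → ℝ} {s : Set X} {x y z : X} (hf : LipschitzOnWith K f s)
    (hx : x ∈ s) (hy : y ∈ s) (hz : z ∈ s)
    (hxy : f x - f y = K * dist x y) (hxzy : dist x z + dist z y = dist x y) :
    f x - f z = K * dist x z := by
  have hle_xz : f x ≤ f z + K * dist x z := hf.le_add_mul hx hz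
  have hle_zy : f z ≤ f y + K * dist z y := hf.le_add_mul hz hy
  rw [← hxzy, mul_add] at hxy
  linarith

section NormedSpace

variable {E : Type*} [NormedAddCommGroup E] [NormedSpace ℝ E] {K : ℝ≥0} {f : E → ℝ}
  {s : Set E} {x y : E}

theorem eventually_apply_lineMap_eq_sub_of_sub_eq_mul_dist (hf : LipschitzOnWith K f s)
    (hs : s ∈ 𝓝 x) (hy : y ∈ s) (hxy : f x - f y = K * dist x y) :
    ∀ᶠ t : ℝ in 𝓝[≥] 0, f (lineMap x y t) = f x - t * (K * dist x y) := by
  have hmem : ∀ᶠ t : ℝ in 𝓝[≥] 0, lineMap x y t ∈ s := by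
    have hcont : Continuous (lineMap x y : ℝ → E) := AffineMap.lineMap_continuous
    exact (hcont.tendsto' 0 x (AffineMap.lineMap_apply_zero x y)).mono_left
      nhdsWithin_le_nhds hs
  filter_upwards [hmem, Icc_mem_nhdsGE zero_lt_one] with t hts ht
  have hdist : dist x (lineMap x y t) = t * dist x y := by
    rw [dist_left_lineMap, Real.norm_of_nonneg ht.1]
  have hbetween : dist x (lineMap x y t) + dist (lineMap x y t) y = dist x y := by
    rw [hdist, dist_lineMap_right, Real.norm_of_nonneg (sub_nonneg.2 ht.2)]
    ring
  have hattained :=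
    sub_eq_mul_dist_of_dist_add_dist_eq hf (mem_of_mem_nhds hs) hy hts hxy hbetween
  rw [hdist] at hattained
  linarith

theorem hasFDerivAt_apply_sub_eq_of_sub_eq_mul_dist {f' : E →L[ℝ] ℝ} (hf' : HasFDerivAt f f' x)
    (hf : LipschitzOnWith K f s) (hs : s ∈ 𝓝 x) (hy : y ∈ s)
    (hxy : f x - f y = K * dist x y) :
    f' (x - y) = K * ‖x - y‖ := by
  have hchain : HasDerivAt (fun t : ℝ ↦ f (lineMap x y t)) (f' (y - x)) 0 :=
    HasFDerivAt.comp_hasDerivAt 0 (by rwa [AffineMap.lineMap_apply_zero])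
      AffineMap.hasDerivAt_lineMap
  have haffine : HasDerivAt (fun t : ℝ ↦ f x - t * (K * dist x y)) (-(K * dist x y)) 0 := by
    simpa using ((hasDerivAt_id (0 : ℝ)).mul_const (K * dist x y)).const_sub (f x)
  have hderiv : f' (y - x) = -(K * dist x y) :=
    (uniqueDiffWithinAt_Ici 0).eq_deriv _ hchain.hasDerivWithinAt <|
      haffine.hasDerivWithinAt.congr_of_eventuallyEq_of_mem
        (eventually_apply_lineMap_eq_sub_of_sub_eq_mul_dist hf hs hy hxy) self_mem_Ici
  rw [← neg_sub y x, map_neg, hderiv, neg_neg, neg_sub, dist_eq_norm]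

variable [StrictConvexSpace ℝ E]

theorem sameRay_of_apply_eq_mul_norm {L : E →L[ℝ] ℝ} {C : ℝ} (hC : 0 < C) (hL : ‖L‖ ≤ C)
    {u v : E} (hu : L u = C * ‖u‖) (hv : L v = C * ‖v‖) : SameRay ℝ u v := by
  refine sameRay_iff_norm_add.2 (le_antisymm (norm_add_le u v) ?_)
  refine le_of_mul_le_mul_left ?_ hC
  calc C * (‖u‖ + ‖v‖) = L (u + v) := by rw [map_add, hu, hv, mul_add]
    _ ≤ ‖L (u + v)‖ := Real.le_norm_self _
    _ ≤ C * ‖u + v‖ := L.le_of_opNorm_le hL _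

theorem not_differentiable_at_branching_point_general {y' : E} (hK : 0 < K)
    (hf : LipschitzOnWith K f s) (hs : s ∈ 𝓝 x) (hy : y ∈ s) (hy' : y' ∈ s)
    (hxy : f x - f y = K * dist x y) (hxy' : f x - f y' = K * dist x y')
    (hdir : ¬ SameRay ℝ (y - x) (y' - x)) :
    ¬ DifferentiableAt ℝ f x := by
  intro hd
  have hray : SameRay ℝ (x - y) (x - y') :=
    sameRay_of_apply_eq_mul_norm hK (norm_fderiv_le_of_lipschitzOn ℝ hs hf)
      (hasFDerivAt_apply_sub_eq_of_sub_eq_mul_dist hd.hasFDerivAt hf hs hy hxy)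
      (hasFDerivAt_apply_sub_eq_of_sub_eq_mul_dist hd.hasFDerivAt hf hs hy' hxy')
  rw [← sameRay_neg_iff, neg_sub, neg_sub] at hray
  exact hdir hray

end NormedSpace

/-- **Non-differentiability at a branching point.** If a 1-Lipschitz `f : ℝⁿ → ℝ`
realizes the Lipschitz bound with equality from `x` towards two points `y, y′` lying in
genuinely different directions from `x`, then `f` is not differentiable at `x`. -/
theorem not_differentiable_at_branching_point (n : ℕ)
    (f : EuclideanSpace ℝ (Fin n) → ℝ) (hf : LipschitzWith 1 f)
    (x y y' : EuclideanSpace ℝ (Fin n))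
    (hy : y ≠ x) (hy' : y' ≠ x)
    (hxy : f x - f y = ‖x - y‖) (hxy' : f x - f y' = ‖x - y'‖)
    (hdir : ¬ ∃ lam : ℝ, 0 < lam ∧ y - x = lam • (y' - x)) :
    ¬ DifferentiableAt ℝ f x := by
  refine not_differentiable_at_branching_point_general one_pos hf.lipschitzOnWith univ_mem
    (mem_univ y) (mem_univ y') (by simpa [dist_eq_norm] using hxy)
    (by simpa [dist_eq_norm] using hxy') fun hray ↦ hdir ?_
  simpa only [eq_comm] using hray.symm.exists_pos_left (sub_ne_zero.2 hy') (sub_ne_zero.2 hy)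
end
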